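/- Let γ ∈ (1,2), let N ≥ 3 be an integer, and let T be the (N−1)×(N−1) real symmetric Toeplitz matrix with entries T_{ij} = ω_{i−j}^{(γ)}, where ω_ℓ^{(γ)} = (−1)^ℓ·Γ(1+γ)/(Γ(1+γ/2−ℓ)·Γ(1+γ/2+ℓ)). Then T is positive definite, i.e., zᵀTz > 0 for every nonzero z ∈ ℝ^{N−1}. -/

import Mathlib

open Matrix Real

/-- The fractional centred difference coefficients
`ω_ℓ^{(γ)} = (−1)^ℓ Γ(1+γ) / (Γ(1+γ/2−ℓ) Γ(1+γ/2+ℓ))`, `ℓ ∈ ℤ`. -/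
noncomputable def omegaFCD (γ : ℝ) (l : ℤ) : ℝ :=
  (-1 : ℝ) ^ l * Real.Gamma (1 + γ) /
    (Real.Gamma (1 + γ / 2 - l) * Real.Gamma (1 + γ / 2 + l))

/-- The `(N−1)×(N−1)` symmetric Toeplitz matrix `T_{ij} = ω_{i−j}^{(γ)}` of the
fractional centred difference discretization. -/
noncomputable def toeplitzFCD (γ : ℝ) (N : ℕ) : Matrix (Fin (N - 1)) (Fin (N - 1)) ℝ :=
  Matrix.of fun i j => omegaFCD γ ((i : ℤ) - (j : ℤ))

lemma omegaFCD_neg (γ : ℝ) (l : ℤ) : omegaFCD γ (-l) = omegaFCD γ l := by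
  unfold omegaFCD
  have : (-1 : ℝ) ^ (-l) = (-1 : ℝ) ^ l := by
    rw [_root_.zpow_neg, ← _root_.inv_zpow]; norm_num
  rw [this]
  push_cast
  rw [sub_neg_eq_add, ← sub_eq_add_neg, mul_comm (Real.Gamma (1 + γ / 2 + l))]

lemma omegaFCD_ne (γ : ℝ) (hγ : γ ∈ Set.Ioo (1 : ℝ) 2) (l : ℤ) : γ / 2 ≠ l := by
  intro h
  have h1 : (0 : ℝ) < l := by linarith [hγ.1]
  have h2 : (l : ℝ) < 1 := by linarith [hγ.2]
  have h3 : 0 < l := by exact_mod_cast h1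
  have h4 : l < 1 := by exact_mod_cast h2
  omega

lemma omegaFCD_rec (γ : ℝ) (hγ : γ ∈ Set.Ioo (1 : ℝ) 2) (l : ℤ) :
    omegaFCD γ (l + 1) * (l + 1 + γ / 2) = omegaFCD γ l * (l - γ / 2) := by
  have n1 : γ / 2 - l ≠ 0 := sub_ne_zero.2 (omegaFCD_ne γ hγ l)
  have n2 : 1 + γ / 2 + l ≠ 0 := by
    intro h
    apply omegaFCD_ne γ hγ (-l - 1)
    push_cast; linarith
  have g (k : ℤ) : Real.Gamma (γ / 2 + k) ≠ 0 := by
    apply Real.Gamma_ne_zero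
    intro m h
    apply omegaFCD_ne γ hγ (-(m : ℤ) - k)
    push_cast; linarith
  have g1 : Real.Gamma (γ / 2 - l) ≠ 0 := by
    have := g (-l); push_cast at this; rwa [← sub_eq_add_neg] at this
  have g2 : Real.Gamma (1 + γ / 2 + l) ≠ 0 := by
    have := g (l + 1); push_cast at this
    rwa [show γ / 2 + ((l : ℝ) + 1) = 1 + γ / 2 + l by ring] at this
  unfold omegaFCD
  have e1 : Real.Gamma (1 + γ / 2 - l) = (γ / 2 - l) * Real.Gamma (γ / 2 - l) := by
    rw [← Real.Gamma_add_one n1]; congr 1; ring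
  have e2 : Real.Gamma (1 + γ / 2 + ((l + 1 : ℤ) : ℝ))
      = (1 + γ / 2 + l) * Real.Gamma (1 + γ / 2 + l) := by
    rw [← Real.Gamma_add_one n2]; congr 1; push_cast; ring
  have e3 : 1 + γ / 2 - ((l + 1 : ℤ) : ℝ) = γ / 2 - l := by push_cast; ring
  rw [e1, e2, e3, zpow_add_one₀ (by norm_num)]
  rw [div_mul_eq_mul_div, div_mul_eq_mul_div, div_eq_div_iff
    (mul_ne_zero g1 (mul_ne_zero n2 g2)) (mul_ne_zero (mul_ne_zero n1 g1) g2)]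
  ring

lemma omegaFCD_zero_pos (γ : ℝ) (hγ : γ ∈ Set.Ioo (1 : ℝ) 2) : 0 < omegaFCD γ 0 := by
  have h := hγ.1
  have h1 : 0 < Real.Gamma (1 + γ) := Real.Gamma_pos_of_pos (by linarith)
  have h2 : 0 < Real.Gamma (1 + γ / 2) := Real.Gamma_pos_of_pos (by linarith)
  simp only [omegaFCD, zpow_zero, Int.cast_zero, sub_zero, add_zero, one_mul]
  positivity

lemma omegaFCD_succ_neg (γ : ℝ) (hγ : γ ∈ Set.Ioo (1 : ℝ) 2) (n : ℕ) :
    omegaFCD γ ((n : ℤ) + 1) < 0 := by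
  obtain ⟨h1, h2⟩ := id hγ
  have key (n : ℕ) := omegaFCD_rec γ hγ n
  have step (n : ℕ) (h : omegaFCD γ (n : ℤ) * ((n : ℝ) - γ / 2) < 0) :
      omegaFCD γ ((n : ℤ) + 1) < 0 := by
    have hk := key n
    push_cast at hk
    rw [← hk] at h
    have hn : (0 : ℝ) ≤ n := Nat.cast_nonneg n
    by_contra hc
    push Not at hc
    have := mul_nonneg hc (by linarith : (0 : ℝ) ≤ (n : ℝ) + 1 + γ / 2)
    linarith
  induction n with
  | zero =>
    apply step
    have := omegaFCD_zero_pos γ hγ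
    push_cast
    nlinarith
  | succ k ih =>
    apply step
    push_cast
    have hn : (0 : ℝ) ≤ k := Nat.cast_nonneg k
    exact mul_neg_of_neg_of_pos ih (by linarith)

lemma omegaFCD_neg_of_ne (γ : ℝ) (hγ : γ ∈ Set.Ioo (1 : ℝ) 2) (l : ℤ) (hl : l ≠ 0) :
    omegaFCD γ l < 0 := by
  have pos (l : ℤ) (hl : 0 < l) : omegaFCD γ l < 0 := by
    have := omegaFCD_succ_neg γ hγ (l - 1).toNat
    rwa [show ((l - 1).toNat : ℤ) + 1 = l by omega] at this
  rcases lt_or_gt_of_ne hl with h | h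
  · rw [← omegaFCD_neg]; exact pos _ (by omega)
  · exact pos l h

lemma omegaFCD_rowsum (γ : ℝ) (hγ : γ ∈ Set.Ioo (1 : ℝ) 2) (i : ℤ) (m : ℕ) :
    γ * ∑ j ∈ Finset.range m, omegaFCD γ (i - j) =
      omegaFCD γ (i - m) * ((i : ℝ) - m - γ / 2) - omegaFCD γ i * (i - γ / 2) := by
  induction m with
  | zero => simp
  | succ k ih =>
    rw [Finset.sum_range_succ, mul_add, ih]
    have h := omegaFCD_rec γ hγ (i - (k + 1))
    rw [show i - ((k : ℤ) + 1) + 1 = i - k by ring] at h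
    push_cast at h ⊢
    linarith

lemma omegaFCD_rowsum_pos (γ : ℝ) (hγ : γ ∈ Set.Ioo (1 : ℝ) 2) (m : ℕ) (i : Fin m) :
    0 < ∑ j : Fin m, omegaFCD γ ((i : ℤ) - (j : ℤ)) := by
  obtain ⟨h1, h2⟩ := id hγ
  rw [Fin.sum_univ_eq_sum_range (fun j => omegaFCD γ ((i : ℤ) - (j : ℤ))) m]
  have h := omegaFCD_rowsum γ hγ i m
  have hi : ((i : ℕ) : ℝ) < m := by exact_mod_cast i.2
  have a1 : omegaFCD γ ((i : ℤ) - m) < 0 := omegaFCD_neg_of_ne γ hγ _ (by have := i.2; omega)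
  have a2 := mul_pos_of_neg_of_neg a1 (by linarith : ((i : ℕ) : ℝ) - m - γ / 2 < 0)
  have a3 : omegaFCD γ ((i : ℕ) : ℤ) * (((i : ℕ) : ℝ) - γ / 2) < 0 := by
    by_cases h0 : (i : ℕ) = 0
    · rw [h0]
      have := omegaFCD_zero_pos γ hγ
      push_cast
      nlinarith
    · have : (1 : ℝ) ≤ ((i : ℕ) : ℝ) := by exact_mod_cast Nat.one_le_iff_ne_zero.2 h0
      exact mul_neg_of_neg_of_pos (omegaFCD_neg_of_ne γ hγ _ (by omega)) (by linarith)
  push_cast at h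
  by_contra hc
  push Not at hc
  nlinarith

/-- For `γ ∈ (1,2)` and `N ≥ 3`, the Toeplitz matrix `T` is positive definite:
`zᵀ T z > 0` for every nonzero `z ∈ ℝ^{N−1}`. -/
theorem stmt19 (γ : ℝ) (hγ : γ ∈ Set.Ioo (1 : ℝ) 2) (N : ℕ) (hN : 3 ≤ N)
    (z : Fin (N - 1) → ℝ) (hz : z ≠ 0) :
    0 < z ⬝ᵥ (toeplitzFCD γ N *ᵥ z) := by
  set w : Fin (N - 1) → Fin (N - 1) → ℝ := fun i j => omegaFCD γ ((i : ℤ) - (j : ℤ)) with hw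
  have hsymm : ∀ i j, w i j = w j i := by
    intro i j
    simp only [hw]
    rw [← omegaFCD_neg, neg_sub]
  have hquad : z ⬝ᵥ (toeplitzFCD γ N *ᵥ z) = ∑ i, ∑ j, w i j * (z i * z j) := by
    simp only [dotProduct, mulVec, toeplitzFCD, Matrix.of_apply, Finset.mul_sum, hw]
    refine Finset.sum_congr rfl fun i _ => Finset.sum_congr rfl fun j _ => by ring
  have hle : ∀ i j, w i j * ((z i ^ 2 + z j ^ 2) / 2) ≤ w i j * (z i * z j) := by
    intro i j
    by_cases h : i = j
    · subst h; apply le_of_eq; ring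
    · have : w i j < 0 := omegaFCD_neg_of_ne γ hγ _ (by
        intro h'; apply h; ext; omega)
      nlinarith [sq_nonneg (z i - z j)]
  have hA : ∑ i, ∑ j, w i j * ((z i ^ 2 + z j ^ 2) / 2) = ∑ i, (∑ j, w i j) * z i ^ 2 := by
    have e1 : ∑ i, ∑ j, w i j * z j ^ 2 = ∑ i, ∑ j, w i j * z i ^ 2 := by
      rw [Finset.sum_comm]
      exact Finset.sum_congr rfl fun i _ => Finset.sum_congr rfl fun j _ => by rw [hsymm]
    have e2 : ∑ i, ∑ j, w i j * ((z i ^ 2 + z j ^ 2) / 2)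
        = (∑ i, ∑ j, w i j * z i ^ 2 + ∑ i, ∑ j, w i j * z j ^ 2) / 2 := by
      simp only [← Finset.sum_add_distrib, Finset.sum_div]
      exact Finset.sum_congr rfl fun i _ => Finset.sum_congr rfl fun j _ => by ring
    rw [e2, e1]
    simp only [Finset.sum_mul]
    ring
  rw [hquad]
  refine lt_of_lt_of_le ?_
    (Finset.sum_le_sum fun i _ => Finset.sum_le_sum fun j _ => hle i j)
  rw [hA]
  have hr : ∀ i, 0 < ∑ j, w i j := fun i => omegaFCD_rowsum_pos γ hγ _ i
  obtain ⟨k, hk⟩ := Function.ne_iff.1 hz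
  refine Finset.sum_pos' (fun i _ => mul_nonneg (hr i).le (sq_nonneg _)) ⟨k, Finset.mem_univ _, ?_⟩
  exact mul_pos (hr k) (lt_of_le_of_ne (sq_nonneg _) (Ne.symm (pow_ne_zero 2 hk)))
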